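/- Let n ≥ 2, m ≥ 3, and let φ₁, …, φ_m : ⟨DS_n⟩ → ⟨DS_n⟩ be maps. The following are equivalent: (1) tr(φ₁(A₁) ⋯ φ_m(A_m)) = tr(A₁ ⋯ A_m) for all A₁, …, A_m ∈ ⟨DS_n⟩; (2) φ₁(A₁) ⋯ φ_m(A_m) and A₁ ⋯ A_m have the same characteristic polynomial for all A₁, …, A_m ∈ ⟨DS_n⟩; (3) either n = 2 and there exist P ∈ {I₂, diag(1, −1)} and invertible matrices Q₁, …, Q_m ∈ ⟨DS_2⟩ with Q₁ Q₂ ⋯ Q_m = I₂ such that φ_i(A) = P A P⁻¹ Q_i for all A ∈ ⟨DS_2⟩ and all i, or n ≥ 3 and there exist invertible matrices P₁, …, P_m, P_{m+1} = P₁ in ⟨DS_n⟩ such that φ_i(A) = P_i A P_{i+1}⁻¹ for all A ∈ ⟨DS_n⟩ and all i ∈ {1, …, m}. -/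

import Mathlib

/-!
The subspace `⟨DS_n⟩` is a subalgebra of the matrix algebra, isomorphic to `ℝ × M_{n-1}(ℝ)`, and
it is closed under transposition, so the trace form `(a, b) ↦ tr (a b)` is nondegenerate on it.

The heart of the proof works in any finite-dimensional algebra with a nondegenerate symmetric trace
form. Dual bases show that the `φ i` are linear bijections and that `U i = φ i 1` is a unit
(`PreservesTrace.linear`). As there are at least three slots, comparing `(A, B, C)` with
`(A B, 1, C)` gives `φ i A * φ (i + 1) B = φ i (A B) * φ (i + 1) 1` (`PreservesTrace.merge`). Hence
`θ A = φ 0 A * (U 0)⁻¹` is an algebra automorphism, and with `V i = U 0 ⋯ U (i - 1)` one gets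
`φ i A = (V i)⁻¹ * θ A * V (i + 1)` (`PreservesTrace.exists_twist`).

It remains to know the automorphisms of `⟨DS_n⟩`. For `n ≥ 3` they fix `e eᵀ / n` (`map_avg`) and are
inner by a Skolem-Noether argument (`inner_of_three_le`). For `n = 2` the algebra is `ℝ × ℝ`, and the
automorphisms are the identity and the swap, which is conjugation by `diag(1, -1)` (`inner_two`). In
either case `θ` preserves the trace, which forces `V m = 1` (`structure_of_inner`) and yields the
canonical forms. Conversely the canonical forms make the two products conjugate, so their
characteristic polynomials agree, and the trace is a coefficient of the characteristic polynomial.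
-/

open Matrix

/-- Membership in `⟨DS_n⟩`: `∃ c, A e = c e ∧ Aᵀ e = c e`, where `e` is the all-ones vector. -/
def InSpanDS {n : ℕ} (A : Matrix (Fin n) (Fin n) ℝ) : Prop :=
  ∃ c : ℝ, A *ᵥ (fun _ => (1:ℝ)) = c • (fun _ => (1:ℝ)) ∧
    Aᵀ *ᵥ (fun _ => (1:ℝ)) = c • (fun _ => (1:ℝ))

/-- Membership in `⟨RS_n⟩`: `∃ c, A e = c e`. -/
def InSpanRS {n : ℕ} (A : Matrix (Fin n) (Fin n) ℝ) : Prop :=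
  ∃ c : ℝ, A *ᵥ (fun _ => (1:ℝ)) = c • (fun _ => (1:ℝ))

/-- Membership in `R_n = {e vᵀ : vᵀ e = 0}`. -/
def InRn {n : ℕ} (A : Matrix (Fin n) (Fin n) ℝ) : Prop :=
  ∃ v : Fin n → ℝ, (∑ i, v i) = 0 ∧ A = vecMulVec (fun _ => (1:ℝ)) v

/-- Membership in `C_n = {v eᵀ : vᵀ e = 0}`. -/
def InCn {n : ℕ} (A : Matrix (Fin n) (Fin n) ℝ) : Prop :=
  ∃ v : Fin n → ℝ, (∑ i, v i) = 0 ∧ A = vecMulVec v (fun _ => (1:ℝ))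

/-- `A` is doubly stochastic. -/
def IsDS {n : ℕ} (A : Matrix (Fin n) (Fin n) ℝ) : Prop :=
  (∀ i j, 0 ≤ A i j) ∧ (∀ i, ∑ j, A i j = 1) ∧ (∀ j, ∑ i, A i j = 1)

/-- `A` is row stochastic. -/
def IsRS {n : ℕ} (A : Matrix (Fin n) (Fin n) ℝ) : Prop :=
  (∀ i j, 0 ≤ A i j) ∧ (∀ i, ∑ j, A i j = 1)

/-- `A` is column stochastic. -/
def IsCS {n : ℕ} (A : Matrix (Fin n) (Fin n) ℝ) : Prop :=
  (∀ i j, 0 ≤ A i j) ∧ (∀ j, ∑ i, A i j = 1)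

/-- `A` is a permutation matrix. -/
def IsPerm {n : ℕ} (A : Matrix (Fin n) (Fin n) ℝ) : Prop :=
  ∃ σ : Equiv.Perm (Fin n), A = σ.permMatrix ℝ

/-- `s_A = (Σ_{i,j} a_{ij})/n²`. -/
noncomputable def sAvg {n : ℕ} (A : Matrix (Fin n) (Fin n) ℝ) : ℝ :=
  (∑ i, ∑ j, A i j) / (n ^ 2 : ℝ)

/-- `r(A)` with `i`-th entry `(Σ_k a_{ki})/n − s_A`. -/
noncomputable def rVec {n : ℕ} (A : Matrix (Fin n) (Fin n) ℝ) : Fin n → ℝ :=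
  fun i => (∑ k, A k i) / (n : ℝ) - sAvg A

/-- `c(A)` with `i`-th entry `(Σ_k a_{ik})/n − s_A`. -/
noncomputable def cVec {n : ℕ} (A : Matrix (Fin n) (Fin n) ℝ) : Fin n → ℝ :=
  fun i => (∑ k, A i k) / (n : ℝ) - sAvg A

/-- `A_R = e · r(A)ᵀ`. -/
noncomputable def partR {n : ℕ} (A : Matrix (Fin n) (Fin n) ℝ) : Matrix (Fin n) (Fin n) ℝ :=
  vecMulVec (fun _ => (1:ℝ)) (rVec A)

/-- `A_C = c(A) · eᵀ`. -/
noncomputable def partC {n : ℕ} (A : Matrix (Fin n) (Fin n) ℝ) : Matrix (Fin n) (Fin n) ℝ :=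
  vecMulVec (cVec A) (fun _ => (1:ℝ))

/-- `A_DS = A − A_R − A_C`. -/
noncomputable def partDS {n : ℕ} (A : Matrix (Fin n) (Fin n) ℝ) : Matrix (Fin n) (Fin n) ℝ :=
  A - partR A - partC A

/-! ### Trace-preserving families on a finite-dimensional algebra -/

/-- The maps `φ i` preserve the functional `τ` on ordered products. -/
def PreservesTrace {R : Type*} [Ring R] [Algebra ℝ R] (τ : R →ₗ[ℝ] ℝ) {m : ℕ}
    (φ : Fin m → R → R) : Prop :=
  ∀ A : Fin m → R, τ (List.ofFn fun i => φ i (A i)).prod = τ (List.ofFn A).prod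

section Abstract

variable {R : Type*} [Ring R] [Algebra ℝ R] {τ : R →ₗ[ℝ] ℝ} {k : ℕ}

/-- Cyclicity of `τ` allows the family to be rotated by one slot. -/
theorem PreservesTrace.shift_one (hc : ∀ a b, τ (a * b) = τ (b * a))
    {φ : Fin (k + 1) → R → R} (H : PreservesTrace τ φ) :
    PreservesTrace τ (fun i => φ (i + 1)) := by
  have rot : ∀ f : Fin (k + 1) → R,
      τ (List.ofFn fun i => f (i + 1)).prod = τ (List.ofFn f).prod := by
    intro f
    rw [List.ofFn_succ' (fun i => f (i + 1)), List.ofFn_succ (f := f)]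
    simp only [List.prod_cons, List.prod_concat, Fin.coeSucc_eq_succ, Fin.last_add_one]
    exact hc _ _
  intro A
  have h := H (fun i => A (i - 1))
  rw [← rot (fun i => φ i (A (i - 1))), ← rot (fun i => A (i - 1))] at h
  simpa using h

theorem PreservesTrace.shift (hc : ∀ a b, τ (a * b) = τ (b * a))
    {φ : Fin (k + 1) → R → R} (H : PreservesTrace τ φ) (j : ℕ) :
    PreservesTrace τ (fun i => φ (i + Fin.ofNat (k + 1) j)) := by
  induction j with
  | zero => simpa [Fin.ofNat] using H
  | succ j ih =>
    have e : Fin.ofNat (k + 1) (j + 1) = 1 + Fin.ofNat (k + 1) j := by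
      rw [add_comm 1 (Fin.ofNat (k + 1) j)]
      ext; simp [Fin.ofNat, Fin.val_add]
    simpa only [e, ← add_assoc] using ih.shift_one hc

/-- The hypothesis specialised to a product with `1` in all slots after the first three. -/
theorem PreservesTrace.three {φ : Fin (k + 3) → R → R} (H : PreservesTrace τ φ) (x y z : R) :
    τ (φ 0 x * (φ 1 y * (φ 2 z * (List.ofFn fun i : Fin k => φ i.succ.succ.succ 1).prod))) =
      τ (x * (y * z)) := by
  have h := H (Fin.cons x (Fin.cons y (Fin.cons z fun _ => 1)))
  simp only [List.ofFn_succ, List.prod_cons, Fin.cons_zero, Fin.cons_succ] at h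
  simpa [List.ofFn_const] using h

variable [FiniteDimensional ℝ R] [IsDedekindFiniteMonoid R]

/-- By nondegeneracy, dual bases show that the elements `φ 1 y * W`, with `W` the product of
the remaining `φ i 1`, span `R`. This forces `φ 0` to be linear and bijective and `W` to be a unit;
hence `φ 2 1` and the product of the later factors of `W` are units too. -/
theorem PreservesTrace.linear (hc : ∀ a b, τ (a * b) = τ (b * a))
    (hd : ∀ a, (∀ b, τ (a * b) = 0) → a = 0)
    {φ : Fin (k + 3) → R → R} (H : PreservesTrace τ φ) :
    (∃ f : R →ₗ[ℝ] R, (∀ x, f x = φ 0 x) ∧ Function.Bijective f) ∧ IsUnit (φ 2 1) ∧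
      IsUnit (List.ofFn fun i : Fin k => φ i.succ.succ.succ 1).prod := by
  set W' := (List.ofFn fun i : Fin k => φ i.succ.succ.succ 1).prod with hW'
  set W := φ 2 1 * W' with hW
  have h2 : ∀ x y, τ (φ 0 x * (φ 1 y * W)) = τ (x * y) := by
    intro x y
    simpa using H.three x y 1
  let B : LinearMap.BilinForm ℝ R := (LinearMap.mul ℝ R).compr₂ τ
  have hBa : ∀ x y, B x y = τ (x * y) := fun x y => rfl
  have hB : B.Nondegenerate :=
    ⟨fun a ha => hd a ha, fun a ha => hd a fun b => by rw [hc]; exact ha b⟩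
  let b := Module.finBasis ℝ R
  let b' := B.dualBasis hB b
  have hbb : ∀ i j, τ (φ 0 (b' i) * (φ 1 (b j) * W)) = if j = i then 1 else 0 := by
    intro i j
    rw [h2, ← hBa]
    exact LinearMap.BilinForm.apply_dualBasis_left hB b i j
  have hli : LinearIndependent ℝ fun j => φ 1 (b j) * W := by
    rw [Fintype.linearIndependent_iff]
    intro g hg i
    have := congrArg (fun z => τ (φ 0 (b' i) * z)) hg
    simpa [Finset.mul_sum, hbb] using this
  have hspan := hli.span_eq_top_of_card_eq_finrank' (by simp)
  have hd' : ∀ d, (∀ y, τ (d * (φ 1 y * W)) = 0) → d = 0 := by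
    intro d h
    apply hd
    intro z
    have hz : z ∈ Submodule.span ℝ (Set.range fun j => φ 1 (b j) * W) := hspan ▸ trivial
    induction hz using Submodule.span_induction with
    | mem z hz => obtain ⟨j, rfl⟩ := hz; exact h _
    | zero => simp
    | add u v _ _ hu hv => simp [mul_add, hu, hv]
    | smul c u _ hu => simp [hu]
  have hadd : ∀ x x', φ 0 (x + x') = φ 0 x + φ 0 x' := by
    intro x x'
    rw [← sub_eq_zero]
    apply hd'
    intro y
    rw [sub_mul, add_mul, map_sub, map_add, h2, h2, h2, add_mul, map_add, sub_self]
  have hsmul : ∀ (c : ℝ) x, φ 0 (c • x) = c • φ 0 x := by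
    intro c x
    rw [← sub_eq_zero]
    apply hd'
    intro y
    rw [sub_mul, smul_mul_assoc, map_sub, map_smul, h2, h2, smul_mul_assoc, map_smul, sub_self]
  let f : R →ₗ[ℝ] R := { toFun := φ 0, map_add' := hadd, map_smul' := hsmul }
  have hinj : Function.Injective f := by
    rw [injective_iff_map_eq_zero]
    intro x hx
    apply hd
    intro y
    rw [← h2]
    change φ 0 x = 0 at hx
    simp [hx]
  have hWu : IsUnit W := by
    have : (1 : R) ∈ LinearMap.range (LinearMap.mulRight ℝ W) := by
      have hle : Submodule.span ℝ (Set.range fun j => φ 1 (b j) * W) ≤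
          LinearMap.range (LinearMap.mulRight ℝ W) := by
        rw [Submodule.span_le]
        rintro _ ⟨j, rfl⟩
        exact ⟨φ 1 (b j), rfl⟩
      exact hle (hspan ▸ trivial)
    obtain ⟨y, hy⟩ := this
    exact IsUnit.of_mul_eq_one_right y hy
  obtain ⟨u, hu⟩ := hWu
  have h2u : IsUnit (φ 2 1) := by
    refine IsUnit.of_mul_eq_one (W' * ↑u⁻¹) ?_
    rw [← mul_assoc, ← hW, ← hu, Units.mul_inv]
  have hWu' : IsUnit W' := by
    refine IsUnit.of_mul_eq_one_right (↑u⁻¹ * φ 2 1) ?_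
    rw [mul_assoc, ← hW, ← hu, Units.inv_mul]
  exact ⟨⟨f, fun _ => rfl, hinj, LinearMap.injective_iff_surjective.mp hinj⟩, h2u, hWu'⟩

/-- The slots `0` and `2` in `PreservesTrace.linear` are moved to slot `j` by rotation. -/
theorem PreservesTrace.linear_all (hc : ∀ a b, τ (a * b) = τ (b * a))
    (hd : ∀ a, (∀ b, τ (a * b) = 0) → a = 0)
    {φ : Fin (k + 3) → R → R} (H : PreservesTrace τ φ) (j : Fin (k + 3)) :
    (∃ f : R →ₗ[ℝ] R, (∀ x, f x = φ j x) ∧ Function.Bijective f) ∧ IsUnit (φ j 1) := by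
  refine ⟨?_, ?_⟩
  · have := ((H.shift hc j.val).linear hc hd).1
    simpa using this
  · have := ((H.shift hc (j - 2 : Fin (k + 3)).val).linear hc hd).2.1
    simpa using this

/-- The factors `A` and `B` in adjacent slots may be merged: both `(A, B, C)` and `(AB, 1, C)` have
product `ABC`, and `C` is arbitrary. -/
theorem PreservesTrace.merge (hc : ∀ a b, τ (a * b) = τ (b * a))
    (hd : ∀ a, (∀ b, τ (a * b) = 0) → a = 0)
    {φ : Fin (k + 3) → R → R} (H : PreservesTrace τ φ) (x y : R) :
    φ 0 x * φ 1 y = φ 0 (x * y) * φ 1 1 := by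
  rw [← sub_eq_zero]
  apply hd
  intro z
  obtain ⟨u, hu⟩ := (H.linear hc hd).2.2
  obtain ⟨⟨f, hf, hfb⟩, -⟩ := H.linear_all hc hd 2
  obtain ⟨w, hw⟩ := hfb.2 (z * ↑u⁻¹)
  have hz : z = φ 2 w * (List.ofFn fun i : Fin k => φ i.succ.succ.succ 1).prod := by
    rw [← hu, ← hf, hw, mul_assoc, Units.inv_mul, mul_one]
  rw [hz, sub_mul, map_sub, mul_assoc, mul_assoc, H.three, H.three]
  simp [mul_assoc]

theorem PreservesTrace.merge_all (hc : ∀ a b, τ (a * b) = τ (b * a))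
    (hd : ∀ a, (∀ b, τ (a * b) = 0) → a = 0)
    {φ : Fin (k + 3) → R → R} (H : PreservesTrace τ φ) (j : Fin (k + 3)) (x y : R) :
    φ j x * φ (j + 1) y = φ j (x * y) * φ (j + 1) 1 := by
  have := (H.shift hc j.val).merge hc hd x y
  simpa [add_comm] using this

/-- Every trace-preserving family is an algebra automorphism `θ` twisted by units. With
`U i = φ i 1` and `V i = U 0 ⋯ U (i - 1)`, the automorphism is `θ x = φ 0 x * (U 0)⁻¹`; the final
clause is the hypothesis for the tuple `(x, 1, …, 1)`. -/
theorem PreservesTrace.exists_twist (hc : ∀ a b, τ (a * b) = τ (b * a))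
    (hd : ∀ a, (∀ b, τ (a * b) = 0) → a = 0)
    {φ : Fin (k + 3) → R → R} (H : PreservesTrace τ φ) :
    ∃ (θ : R →ₐ[ℝ] R) (U : Fin (k + 3) → Rˣ) (V : ℕ → Rˣ), Function.Bijective θ ∧
      V 0 = 1 ∧ (∀ i : Fin (k + 3), V (i.val + 1) = V i.val * U i) ∧
      ((List.ofFn fun i => (U i : R)).prod = V (k + 3)) ∧
      (∀ (i : Fin (k + 3)) x, φ i x = ↑(V i.val)⁻¹ * θ x * ↑(V (i.val + 1))) ∧
      ∀ x, τ (θ x * V (k + 3)) = τ x := by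
  choose U hU using fun j => (H.linear_all hc hd j).2
  obtain ⟨⟨f, hf, hfb⟩, -⟩ := H.linear_all hc hd 0
  have hm := H.merge_all hc hd
  simp only [← hU] at hm
  -- taking `x = 1` in the merging identity determines `φ (j + 1)` from `φ j`
  have hstep : ∀ j x, φ (j + 1) x = ↑(U j)⁻¹ * φ j x * U (j + 1) := by
    intro j x
    have := hm j 1 x
    rw [← hU, one_mul] at this
    rw [mul_assoc, ← this, Units.inv_mul_cancel_left]
  have hmul : ∀ x y, φ 0 (x * y) = φ 0 x * ↑(U 0)⁻¹ * φ 0 y := by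
    intro x y
    have := hm 0 x y
    rw [hstep 0 y] at this
    rw [← Units.mul_left_inj (U (0 + 1)), ← this]
    simp only [mul_assoc]
  let θ : R →ₐ[ℝ] R := AlgHom.ofLinearMap
    ((LinearMap.mulRight ℝ (↑(U 0)⁻¹ : R)).comp f)
    (by simp [hf, ← hU]) (by intro x y; simp [hf, hmul, mul_assoc])
  have hθ : ∀ x, θ x = φ 0 x * ↑(U 0)⁻¹ := by
    intro x; simp [θ, hf]
  have hθ0 : ∀ x, φ 0 x = θ x * U 0 := by
    intro x; simp [hθ, mul_assoc]
  -- `Fin.ofNat` reduces modulo `k + 3`; only the values of `V` up to `k + 3` matter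
  let V : ℕ → Rˣ := fun i => (List.ofFn fun j : Fin i => U (Fin.ofNat (k + 3) j.val)).prod
  have hV0 : V 0 = 1 := by simp [V]
  have hVs' : ∀ i : ℕ, V (i + 1) = V i * U (Fin.ofNat (k + 3) i) := by
    intro i
    simp only [V, List.ofFn_succ', List.prod_concat]
    rfl
  have hVs : ∀ i : Fin (k + 3), V (i.val + 1) = V i.val * U i := by
    intro i
    rw [hVs']
    simp
  have hVm : (List.ofFn fun i => (U i : R)).prod = V (k + 3) := by
    simp only [V]
    rw [← Units.coeHom_apply, map_list_prod, List.map_ofFn]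
    congr 2
    ext i
    simp
  have hφ : ∀ (i : ℕ) x, φ (Fin.ofNat (k + 3) i) x = ↑(V i)⁻¹ * θ x * ↑(V (i + 1)) := by
    intro i
    induction i with
    | zero =>
      intro x
      rw [hVs', hV0]
      simpa using hθ0 x
    | succ i ih =>
      intro x
      have e : (Fin.ofNat (k + 3) (i + 1)) = Fin.ofNat (k + 3) i + 1 := by
        ext; simp [Fin.ofNat, Fin.val_add]
      rw [hVs' (i + 1), e, hstep, ih, hVs' i]
      simp [mul_assoc]
  refine ⟨θ, U, V, ⟨?_, ?_⟩, hV0, hVs, hVm, ?_, ?_⟩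
  · intro x y h
    rw [hθ, hθ, Units.mul_left_inj, ← hf, ← hf] at h
    exact hfb.1 h
  · intro y
    obtain ⟨x, hx⟩ := hfb.2 (y * U 0)
    exact ⟨x, by rw [hθ, ← hf, hx, mul_assoc, Units.mul_inv, mul_one]⟩
  · intro i x
    have := hφ i.val x
    rwa [Fin.ofNat_eq_cast, Fin.cast_val_eq_self] at this
  · intro x
    have h := H (Fin.cons x fun _ => 1)
    rw [List.ofFn_succ, List.ofFn_succ] at h
    rw [← hVm, List.ofFn_succ, List.prod_cons, ← mul_assoc, ← hθ0]
    simpa [← hU, List.ofFn_const] using h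

end Abstract

/-! ### The algebra `⟨DS_n⟩` and its automorphisms for `n ≥ 3` -/

section Span

variable {n : ℕ}

/-- Membership with the transpose replaced by `vecMul` and `e` written as `1`. -/
theorem inSpanDS_iff {A : Matrix (Fin n) (Fin n) ℝ} :
    InSpanDS A ↔ ∃ c : ℝ, A *ᵥ 1 = c • 1 ∧ 1 ᵥ* A = c • 1 := by
  simp only [InSpanDS, mulVec_transpose]
  rfl

/-- `⟨DS_n⟩` as a subalgebra of the matrix algebra. -/
def spanDS (n : ℕ) : Subalgebra ℝ (Matrix (Fin n) (Fin n) ℝ) where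
  carrier := {A | InSpanDS A}
  mul_mem' := by
    intro A B hA hB
    obtain ⟨c, h1, h2⟩ := inSpanDS_iff.1 hA
    obtain ⟨d, h3, h4⟩ := inSpanDS_iff.1 hB
    refine inSpanDS_iff.2 ⟨c * d, ?_, ?_⟩
    · rw [← mulVec_mulVec, h3, mulVec_smul, h1, smul_smul, mul_comm]
    · rw [← vecMul_vecMul, h2, smul_vecMul, h4, smul_smul]
  add_mem' := by
    intro A B hA hB
    obtain ⟨c, h1, h2⟩ := inSpanDS_iff.1 hA
    obtain ⟨d, h3, h4⟩ := inSpanDS_iff.1 hB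
    refine inSpanDS_iff.2 ⟨c + d, ?_, ?_⟩
    · rw [add_mulVec, h1, h3, add_smul]
    · rw [vecMul_add, h2, h4, add_smul]
  algebraMap_mem' := by
    intro r
    refine inSpanDS_iff.2 ⟨r, ?_, ?_⟩
    · rw [Algebra.algebraMap_eq_smul_one, smul_mulVec, one_mulVec]
    · rw [Algebra.algebraMap_eq_smul_one, vecMul_smul, vecMul_one]

theorem mem_spanDS {A : Matrix (Fin n) (Fin n) ℝ} : A ∈ spanDS n ↔ InSpanDS A := Iff.rfl

/-- Inherited from the matrix algebra: a one-sided inverse inside `⟨DS_n⟩` is two-sided. -/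
instance : IsDedekindFiniteMonoid (spanDS n) :=
  IsDedekindFiniteMonoid.of_injective (spanDS n).val Subtype.val_injective

/-- The trace restricted to `⟨DS_n⟩`. -/
noncomputable def trDS (n : ℕ) : spanDS n →ₗ[ℝ] ℝ :=
  (traceLinearMap (Fin n) ℝ ℝ).comp (spanDS n).val.toLinearMap

theorem trDS_apply (a : spanDS n) : trDS n a = (a : Matrix (Fin n) (Fin n) ℝ).trace := rfl

theorem trDS_comm (a b : spanDS n) : trDS n (a * b) = trDS n (b * a) := by
  simp only [trDS_apply, MulMemClass.coe_mul]
  exact trace_mul_comm _ _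

/-- `⟨DS_n⟩` is closed under transposition, so `tr (a aᵀ)` is available. -/
theorem trDS_nondeg (a : spanDS n) (h : ∀ b, trDS n (a * b) = 0) : a = 0 := by
  have ht : InSpanDS (a : Matrix (Fin n) (Fin n) ℝ)ᵀ := by
    obtain ⟨c, h1, h2⟩ := a.2
    exact ⟨c, h2, by simpa using h1⟩
  have := h ⟨_, ht⟩
  rw [trDS_apply, MulMemClass.coe_mul] at this
  have h0 := (trace_mul_conjTranspose_self_eq_zero_iff
    (A := (a : Matrix (Fin n) (Fin n) ℝ))).1 (by simpa using this)
  exact Subtype.ext h0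

/-- The matrix `e eᵀ / n`. -/
noncomputable def avg (n : ℕ) : Matrix (Fin n) (Fin n) ℝ := (n : ℝ)⁻¹ • vecMulVec 1 1

theorem mul_avg {A : Matrix (Fin n) (Fin n) ℝ} {c : ℝ} (h : A *ᵥ 1 = c • 1) :
    A * avg n = c • avg n := by
  rw [avg, Matrix.mul_smul, mul_vecMulVec, h, smul_vecMulVec, smul_comm]

theorem avg_mul {A : Matrix (Fin n) (Fin n) ℝ} {c : ℝ} (h : 1 ᵥ* A = c • 1) :
    avg n * A = c • avg n := by
  rw [avg, Matrix.smul_mul, vecMulVec_mul, h, vecMulVec_smul, smul_comm]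

theorem avg_mulVec_one (hn : n ≠ 0) : avg n *ᵥ 1 = 1 := by
  have : (n : ℝ) ≠ 0 := by exact_mod_cast hn
  rw [avg, smul_mulVec, vecMulVec_mulVec]
  ext i
  simp [this]

theorem one_vecMul_avg (hn : n ≠ 0) : 1 ᵥ* avg n = 1 := by
  have : (n : ℝ) ≠ 0 := by exact_mod_cast hn
  rw [avg, vecMul_smul, vecMul_vecMulVec]
  ext i
  simp [this]

theorem avg_mul_avg (hn : n ≠ 0) : avg n * avg n = avg n := by
  simpa using mul_avg (A := avg n) (c := 1) (by simpa using avg_mulVec_one hn)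

theorem avg_mem (hn : n ≠ 0) : avg n ∈ spanDS n :=
  inSpanDS_iff.2 ⟨1, by simpa using avg_mulVec_one hn, by simpa using one_vecMul_avg hn⟩

theorem vecMulVec_mem {x y : Fin n → ℝ} (hx : 1 ⬝ᵥ x = 0) (hy : y ⬝ᵥ 1 = 0) :
    vecMulVec x y ∈ spanDS n :=
  inSpanDS_iff.2 ⟨0, by rw [vecMulVec_mulVec, hy]; simp, by rw [vecMul_vecMulVec, hx]; simp⟩

/-- In dimension at least three, `e^⊥` contains a nonzero vector orthogonal to a given one. -/
theorem exists_orthogonal (hn : 3 ≤ n) (z : Fin n → ℝ) :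
    ∃ y : Fin n → ℝ, y ≠ 0 ∧ 1 ⬝ᵥ y = 0 ∧ z ⬝ᵥ y = 0 := by
  let f : (Fin n → ℝ) →ₗ[ℝ] (Fin 2 → ℝ) := (Matrix.of ![1, z]).mulVecLin
  have hker : LinearMap.ker f ≠ ⊥ := LinearMap.ker_ne_bot_of_finrank_lt (by simp; omega)
  obtain ⟨y, hy, hy0⟩ := Submodule.exists_mem_ne_zero_of_ne_bot hker
  have h : f y = 0 := hy
  exact ⟨y, hy0, congrFun h 0, congrFun h 1⟩

/-- For `n ≥ 3` an automorphism fixes `J = e eᵀ / n`. The image `Z` of `J` is a central idempotent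
such that `A Z` is always a multiple of `Z`. Either `J Z ≠ 0` and `Z` is a multiple of `J`, hence
equal to `J`, or `J Z = 0`; in the latter case a nonzero column of `Z` would be an eigenvector of every
matrix in `⟨DS_n⟩`, contradicting `dim e^⊥ ≥ 2`. -/
theorem map_avg (hn : 3 ≤ n) (θ : spanDS n →ₐ[ℝ] spanDS n) (hθ : Function.Bijective θ)
    (J : spanDS n) (hJ : (J : Matrix (Fin n) (Fin n) ℝ) = avg n) : θ J = J := by
  have hn0 : n ≠ 0 := by omega
  have hJJ : J * J = J := Subtype.ext (by simp [hJ, avg_mul_avg hn0])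
  have hl : ∀ a : spanDS n, ∃ c : ℝ, a * J = c • J ∧ J * a = c • J := by
    intro a
    obtain ⟨c, h1, h2⟩ := inSpanDS_iff.1 a.2
    refine ⟨c, Subtype.ext ?_, Subtype.ext ?_⟩
    · simp [hJ, mul_avg h1]
    · simp [hJ, avg_mul h2]
  have hJ0 : J ≠ 0 := by
    intro h
    have h1 := avg_mulVec_one hn0
    rw [← hJ, h] at h1
    have := congrFun h1 ⟨0, by omega⟩
    simp at this
  set Z := θ J with hZ
  have hZZ : Z * Z = Z := by rw [hZ, ← map_mul, hJJ]
  have hZ0 : Z ≠ 0 := fun h => hJ0 (hθ.1 (by rw [← hZ, h, map_zero]))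
  have hZc : ∀ a, ∃ c : ℝ, a * Z = c • Z ∧ Z * a = c • Z := by
    intro a
    obtain ⟨b, rfl⟩ := hθ.2 a
    obtain ⟨c, h1, h2⟩ := hl b
    exact ⟨c, by rw [hZ, ← map_mul, h1, map_smul], by rw [hZ, ← map_mul, h2, map_smul]⟩
  obtain ⟨c, hc1, hc2⟩ := hl Z
  obtain ⟨d, hd1, hd2⟩ := hZc J
  by_cases hd : d = 0
  · exfalso
    have hJZ : J * Z = 0 := by rw [hd1, hd, zero_smul]
    obtain ⟨i, j, hij⟩ : ∃ i j, (Z : Matrix (Fin n) (Fin n) ℝ) i j ≠ 0 := by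
      by_contra! h
      exact hZ0 (Subtype.ext (Matrix.ext h))
    set z : Fin n → ℝ := fun i => (Z : Matrix (Fin n) (Fin n) ℝ) i j with hz
    have hz0 : z ≠ 0 := fun h => hij (congrFun h i)
    have hz1 : 1 ⬝ᵥ z = 0 := by
      have h1 : avg n * (Z : Matrix (Fin n) (Fin n) ℝ) = 0 := by
        rw [← hJ]; exact congrArg Subtype.val hJZ
      have h2 : 1 ᵥ* (avg n * (Z : Matrix (Fin n) (Fin n) ℝ)) = 0 := by rw [h1, vecMul_zero]
      rw [← vecMul_vecMul, one_vecMul_avg hn0] at h2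
      exact congrFun h2 j
    obtain ⟨y, hy0, hy1, hyz⟩ := exists_orthogonal hn z
    obtain ⟨t, ht, -⟩ := hZc ⟨vecMulVec y z, vecMulVec_mem hy1 (by rw [dotProduct_comm, hz1])⟩
    have h3 : vecMulVec y z *ᵥ z = t • z := by
      ext a
      have := congrFun (congrFun (congrArg Subtype.val ht) a) j
      simpa [mul_apply, mulVec, dotProduct] using this
    rw [vecMulVec_mulVec] at h3
    have h4 := congrArg (fun v => y ⬝ᵥ v) h3
    simp only [dotProduct_smul, dotProduct_comm y z, hyz] at h4
    have h5 : (z ⬝ᵥ z) * (y ⬝ᵥ y) = 0 := by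
      simpa [dotProduct_self_eq_zero, or_comm] using h4
    rcases mul_eq_zero.1 h5 with h | h
    · exact hz0 (dotProduct_self_eq_zero.1 h)
    · exact hy0 (dotProduct_self_eq_zero.1 h)
  · have h1 : d • Z = c • J := by rw [← hd1, hc2]
    have h2 : Z = (d⁻¹ * c) • J := by rw [mul_smul, ← h1, inv_smul_smul₀ hd]
    set r := d⁻¹ * c
    have hr0 : r ≠ 0 := by
      intro h
      rw [h, zero_smul] at h2
      exact hZ0 h2
    have h3 : (r * r) • J = r • J := by
      rw [h2] at hZZ
      simpa [smul_smul, hJJ] using hZZ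
    have h4 : r * r = r := smul_left_injective ℝ hJ0 h3
    have h5 : r = 1 := by
      apply mul_left_cancel₀ hr0
      rw [h4, mul_one]
    rw [h2, h5, one_smul]

/-- For `n ≥ 3` automorphisms of `⟨DS_n⟩` are inner. Fix a rank-one idempotent `E = u uᵀ / |u|²` with
`u ⊥ e` and `w ≠ 0` with `θ(E) w = w`; the intertwiner is `P x = J x + θ((1 - J) x uᵀ) w`. -/
theorem inner_of_three_le (hn : 3 ≤ n) (θ : spanDS n →ₐ[ℝ] spanDS n)
    (hθ : Function.Bijective θ) :
    ∃ P : Matrix (Fin n) (Fin n) ℝ, InSpanDS P ∧ IsUnit P ∧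
      ∀ a : spanDS n, (θ a : Matrix (Fin n) (Fin n) ℝ) * P = P * a := by
  have hn0 : n ≠ 0 := by omega
  let J : spanDS n := ⟨avg n, avg_mem hn0⟩
  have hJ : θ J = J := map_avg hn θ hθ J rfl
  have hJJ : J * J = J := Subtype.ext (avg_mul_avg hn0)
  have hJc : ∀ a : spanDS n, a * J = J * a := by
    intro a
    obtain ⟨c, h1, h2⟩ := inSpanDS_iff.1 a.2
    apply Subtype.ext
    simp [J, mul_avg h1, avg_mul h2]
  obtain ⟨u, hu0, hu1, -⟩ := exists_orthogonal hn 0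
  have huu : u ⬝ᵥ u ≠ 0 := fun h => hu0 (dotProduct_self_eq_zero.1 h)
  have hQ1 : 1 ᵥ* (1 - avg n) = 0 := by
    rw [vecMul_sub, vecMul_one, one_vecMul_avg hn0, sub_self]
  have hmem : ∀ x, (1 - avg n) * vecMulVec x u ∈ spanDS n := by
    intro x
    refine inSpanDS_iff.2 ⟨0, ?_, ?_⟩
    · rw [← mulVec_mulVec, vecMulVec_mulVec, dotProduct_comm u, hu1]
      simp
    · rw [← vecMul_vecMul, hQ1]
      simp
  let K : (Fin n → ℝ) →ₗ[ℝ] spanDS n :=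
    { toFun := fun x => ⟨(1 - avg n) * vecMulVec x u, hmem x⟩
      map_add' := fun x y => Subtype.ext (by simp [add_vecMulVec, Matrix.mul_add])
      map_smul' := fun c x => Subtype.ext (by simp [smul_vecMulVec]) }
  have hKc : ∀ x, (K x : Matrix (Fin n) (Fin n) ℝ) = (1 - avg n) * vecMulVec x u := fun x => rfl
  have hKa : ∀ (a : spanDS n) x, a * K x = K ((a : Matrix (Fin n) (Fin n) ℝ) *ᵥ x) := by
    intro a x
    apply Subtype.ext
    have h := congrArg Subtype.val (hJc a)
    simp only [MulMemClass.coe_mul, J] at h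
    rw [MulMemClass.coe_mul, hKc, hKc, ← mul_vecMulVec, ← mul_assoc, ← mul_assoc, mul_sub, sub_mul,
      h, mul_one, sub_mul, sub_mul, one_mul]
  have hJK : ∀ x, J * K x = 0 := by
    intro x
    apply Subtype.ext
    change avg n * ((1 - avg n) * vecMulVec x u) = 0
    rw [← mul_assoc, mul_sub, avg_mul_avg hn0, mul_one, sub_self, zero_mul]
  have hKu : (K u : Matrix (Fin n) (Fin n) ℝ) = vecMulVec u u := by
    rw [hKc, sub_mul, one_mul, avg, Matrix.smul_mul, vecMulVec_mul_vecMulVec, hu1]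
    simp
  let E : spanDS n := (u ⬝ᵥ u)⁻¹ • K u
  have hE0 : E ≠ 0 := by
    intro h
    have h1 : K u = 0 := by simpa [E, huu] using h
    have h2 : vecMulVec u u *ᵥ u = 0 := by rw [← hKu, h1]; simp
    rw [vecMulVec_mulVec] at h2
    have : (u ⬝ᵥ u) • u = 0 := by simpa using h2
    exact (smul_ne_zero huu hu0) this
  have hEE : E * E = E := by
    apply Subtype.ext
    simp only [E, MulMemClass.coe_mul, SetLike.val_smul, hKu]
    rw [Matrix.smul_mul, Matrix.mul_smul, vecMulVec_mul_vecMulVec]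
    rw [vecMulVec_smul, inv_smul_smul₀ huu]
  have hθE : (θ E : Matrix (Fin n) (Fin n) ℝ) ≠ 0 := by
    intro h
    exact hE0 (hθ.1 (by rw [map_zero]; exact Subtype.ext h))
  obtain ⟨w, hw0, hw⟩ : ∃ w : Fin n → ℝ, w ≠ 0 ∧
      (θ E : Matrix (Fin n) (Fin n) ℝ) *ᵥ w = w := by
    obtain ⟨v, hv⟩ : ∃ v, (θ E : Matrix (Fin n) (Fin n) ℝ) *ᵥ v ≠ 0 := by
      by_contra! h
      exact hθE (Matrix.mulVec_injective (by ext1 v; simp [h]))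
    refine ⟨_, hv, ?_⟩
    rw [mulVec_mulVec, ← MulMemClass.coe_mul, ← map_mul, hEE]
  -- `θ (K x) w` transports the action on `e^⊥`; the summand `avg n *ᵥ x` takes care of the line `ℝ e`
  let L : (Fin n → ℝ) →ₗ[ℝ] (Fin n → ℝ) :=
    { toFun := fun x => avg n *ᵥ x + (θ (K x) : Matrix (Fin n) (Fin n) ℝ) *ᵥ w
      map_add' := fun x y => by
        simp only [mulVec_add, map_add, AddMemClass.coe_add, add_mulVec]; abel
      map_smul' := fun c x => by
        simp only [mulVec_smul, map_smul, SetLike.val_smul, smul_mulVec, smul_add,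
          RingHom.id_apply] }
  let P := LinearMap.toMatrix' L
  have hP : ∀ x, P *ᵥ x = avg n *ᵥ x + (θ (K x) : Matrix (Fin n) (Fin n) ℝ) *ᵥ w :=
    fun x => LinearMap.toMatrix'_mulVec L x
  have hJθ : ∀ x, avg n * (θ (K x) : Matrix (Fin n) (Fin n) ℝ) = 0 := by
    intro x
    have : J * θ (K x) = 0 := by rw [← hJ, ← map_mul, hJK, map_zero]
    exact congrArg Subtype.val this
  have hJP : ∀ x, avg n *ᵥ (P *ᵥ x) = avg n *ᵥ x := by
    intro x
    rw [hP, mulVec_add, mulVec_mulVec, mulVec_mulVec, avg_mul_avg hn0, hJθ]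
    simp
  have hK1 : K 1 = 0 := by
    apply Subtype.ext
    rw [hKc, mul_vecMulVec, sub_mulVec, avg_mulVec_one hn0]
    simp
  refine ⟨P, inSpanDS_iff.2 ⟨1, ?_, ?_⟩, ?_, ?_⟩
  · rw [hP, hK1, avg_mulVec_one hn0]
    simp
  · have h : avg n * P = avg n := by
      apply Matrix.mulVec_injective
      ext1 x
      rw [← mulVec_mulVec, hJP]
    calc (1 : Fin n → ℝ) ᵥ* P = (1 ᵥ* avg n) ᵥ* P := by rw [one_vecMul_avg hn0]
      _ = (1 : ℝ) • 1 := by rw [vecMul_vecMul, h, one_vecMul_avg hn0, one_smul]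
  · rw [← Matrix.mulVec_injective_iff_isUnit]
    rw [← Matrix.coe_mulVecLin, injective_iff_map_eq_zero]
    intro x hx
    rw [Matrix.mulVecLin_apply] at hx
    have h1 : avg n *ᵥ x = 0 := by rw [← hJP, hx, mulVec_zero]
    have h2 : (θ (K x) : Matrix (Fin n) (Fin n) ℝ) *ᵥ w = 0 := by
      rw [hP, h1, zero_add] at hx
      exact hx
    have h3 : 1 ⬝ᵥ x = 0 := by
      have : 1 ⬝ᵥ (avg n *ᵥ x) = 0 := by rw [h1, dotProduct_zero]
      rwa [dotProduct_mulVec, one_vecMul_avg hn0] at this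
    by_contra hx0
    have hxx : x ⬝ᵥ x ≠ 0 := fun h => hx0 (dotProduct_self_eq_zero.1 h)
    -- `u xᵀ` maps `x` to a nonzero multiple of `u`, hence `K x` to a nonzero multiple of `E`
    let a : spanDS n := ⟨vecMulVec u x, vecMulVec_mem hu1 (by rw [dotProduct_comm, h3])⟩
    have h4 : a * K x = ((x ⬝ᵥ x) * (u ⬝ᵥ u)) • E := by
      rw [hKa]
      change K (vecMulVec u x *ᵥ x) = _
      rw [vecMulVec_mulVec]
      simp only [E, smul_smul, mul_assoc, mul_inv_cancel₀ huu, mul_one]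
      rw [← map_smul]
      simp
    have h5 : (θ (a * K x) : Matrix (Fin n) (Fin n) ℝ) *ᵥ w = 0 := by
      rw [map_mul, MulMemClass.coe_mul, ← mulVec_mulVec, h2, mulVec_zero]
    rw [h4, map_smul, SetLike.val_smul, smul_mulVec, hw] at h5
    exact smul_ne_zero (mul_ne_zero hxx huu) hw0 h5
  · intro a
    apply Matrix.mulVec_injective
    ext1 x
    have hθJ : (θ a : Matrix (Fin n) (Fin n) ℝ) * avg n = avg n * (a : Matrix (Fin n) (Fin n) ℝ) := by
      have h1 : θ a * J = J * a := by
        obtain ⟨c, h1, h2⟩ := inSpanDS_iff.1 a.2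
        have h3 : a * J = c • J := Subtype.ext (by simp [J, mul_avg h1])
        rw [← hJc a, h3]
        nth_rewrite 1 [← hJ]
        rw [← map_mul, h3, map_smul, hJ]
      exact congrArg Subtype.val h1
    rw [← mulVec_mulVec, ← mulVec_mulVec, hP, hP, mulVec_add, mulVec_mulVec, hθJ, mulVec_mulVec,
      mulVec_mulVec, ← MulMemClass.coe_mul, ← map_mul, hKa]

end Span

/-! ### The case of two-by-two matrices -/

section Two

theorem spanDS_two {a : Matrix (Fin 2) (Fin 2) ℝ} (h : InSpanDS a) :
    a 1 0 = a 0 1 ∧ a 1 1 = a 0 0 := by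
  obtain ⟨c, h1, h2⟩ := h
  have e1 := congrFun h1 0
  have e2 := congrFun h1 1
  have e3 := congrFun h2 0
  simp [mulVec, dotProduct, Fin.sum_univ_two] at e1 e2 e3
  constructor <;> linarith

theorem inSpanDS_two {a : Matrix (Fin 2) (Fin 2) ℝ} (h : a 1 0 = a 0 1) (h' : a 1 1 = a 0 0) :
    InSpanDS a := by
  refine ⟨a 0 0 + a 0 1, ?_, ?_⟩ <;> ext i <;> fin_cases i <;>
    simp [mulVec, dotProduct, Fin.sum_univ_two, h, h', add_comm]

theorem spanDS_two_comm {a b : Matrix (Fin 2) (Fin 2) ℝ} (ha : InSpanDS a) (hb : InSpanDS b) :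
    a * b = b * a := by
  obtain ⟨h1, h2⟩ := spanDS_two ha
  obtain ⟨h3, h4⟩ := spanDS_two hb
  ext i j
  fin_cases i <;> fin_cases j <;> simp [mul_apply, Fin.sum_univ_two, h1, h2, h3, h4] <;> ring

/-- The matrix `diag(1, -1)` for `n = 2`, written for general `n`. -/
noncomputable def signMat (n : ℕ) : Matrix (Fin n) (Fin n) ℝ :=
  Matrix.diagonal (fun i => if i.val = 0 then (1:ℝ) else -1)

theorem signMat_two : signMat 2 = !![1, 0; 0, -1] := by
  ext i j
  fin_cases i <;> fin_cases j <;> simp [signMat]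

theorem signMat_mul_self : signMat 2 * signMat 2 = 1 := by
  rw [signMat_two]
  ext i j
  fin_cases i <;> fin_cases j <;> simp

theorem signMat_conj {a : Matrix (Fin 2) (Fin 2) ℝ} (h : InSpanDS a) :
    InSpanDS (signMat 2 * a * (signMat 2)⁻¹) := by
  obtain ⟨h1, h2⟩ := spanDS_two h
  rw [Matrix.inv_eq_right_inv signMat_mul_self, signMat_two]
  apply inSpanDS_two <;> simp [mul_apply, vecMul, dotProduct, Fin.sum_univ_two, h1, h2]

/-- For `n = 2` the algebra is spanned by `1` and the swap matrix `X`, and `θ(X)² = 1` together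
with injectivity leaves `θ(X) = ±X`. -/
theorem inner_two (θ : spanDS 2 →ₐ[ℝ] spanDS 2) (hθ : Function.Bijective θ) :
    ∃ P : Matrix (Fin 2) (Fin 2) ℝ, (P = 1 ∨ P = signMat 2) ∧ IsUnit P ∧
      ∀ a : spanDS 2, (θ a : Matrix (Fin 2) (Fin 2) ℝ) * P = P * a := by
  let X : spanDS 2 := ⟨!![0, 1; 1, 0], inSpanDS_two (by simp) (by simp)⟩
  have hX : (X : Matrix (Fin 2) (Fin 2) ℝ) = !![0, 1; 1, 0] := rfl
  have hdec : ∀ a : spanDS 2, a = (a : Matrix (Fin 2) (Fin 2) ℝ) 0 0 • 1 +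
      (a : Matrix (Fin 2) (Fin 2) ℝ) 0 1 • X := by
    intro a
    obtain ⟨h1, h2⟩ := spanDS_two a.2
    apply Subtype.ext
    ext i j
    fin_cases i <;> fin_cases j <;> simp [hX, h1, h2]
  have hXX : X * X = 1 := by
    apply Subtype.ext
    ext i j
    fin_cases i <;> fin_cases j <;> simp [hX]
  obtain ⟨x, hx⟩ : ∃ x, (θ X : Matrix (Fin 2) (Fin 2) ℝ) 0 0 = x := ⟨_, rfl⟩
  obtain ⟨y, hy⟩ : ∃ y, (θ X : Matrix (Fin 2) (Fin 2) ℝ) 0 1 = y := ⟨_, rfl⟩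
  have hθX : θ X = x • 1 + y • X := by rw [← hx, ← hy]; exact hdec _
  have hsq : θ X * θ X = 1 := by rw [← map_mul, hXX, map_one]
  have hM := congrArg Subtype.val hsq
  rw [hθX] at hM
  have e1 := congrFun (congrFun hM 0) 0
  have e2 := congrFun (congrFun hM 0) 1
  simp [hX, mul_apply, Fin.sum_univ_two] at e1 e2
  have hy0 : y ≠ 0 := by
    intro h
    have h1 : θ X = θ (x • 1) := by rw [hθX, h, map_smul, map_one]; simp
    have h2 := congrFun (congrFun (congrArg Subtype.val (hθ.1 h1)) 0) 1
    simp [hX] at h2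
  have hx0 : x = 0 := by
    have : x * y = 0 := by linarith
    exact (mul_eq_zero.1 this).resolve_right hy0
  have hθa : ∀ a : spanDS 2, θ a = (a : Matrix (Fin 2) (Fin 2) ℝ) 0 0 • 1 +
      ((a : Matrix (Fin 2) (Fin 2) ℝ) 0 1 * y) • X := by
    intro a
    conv_lhs => rw [hdec a]
    rw [map_add, map_smul, map_smul, map_one, hθX, hx0, zero_smul, zero_add, smul_smul]
  have hyy : y = 1 ∨ y = -1 := by
    rw [hx0] at e1
    exact mul_self_eq_one_iff.1 (by linarith)
  rcases hyy with rfl | rfl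
  · refine ⟨1, Or.inl rfl, isUnit_one, fun a => ?_⟩
    rw [show θ a = a by rw [hθa, mul_one, ← hdec], mul_one, one_mul]
  · refine ⟨signMat 2, Or.inr rfl, IsUnit.of_mul_eq_one _ signMat_mul_self, fun a => ?_⟩
    obtain ⟨h1, h2⟩ := spanDS_two a.2
    rw [hθa, signMat_two]
    ext i j
    fin_cases i <;> fin_cases j <;> simp [hX, mul_apply, Fin.sum_univ_two, h1, h2]

end Two

/-! ### Products and the twisting units -/

section Assembly

variable {n : ℕ}

theorem coe_prod_ofFn {m : ℕ} (f : Fin m → spanDS n) :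
    (((List.ofFn f).prod : spanDS n) : Matrix (Fin n) (Fin n) ℝ) =
      (List.ofFn fun i => (f i : Matrix (Fin n) (Fin n) ℝ)).prod := by
  have := map_list_prod (spanDS n).val (List.ofFn f)
  rw [List.map_ofFn] at this
  exact this

theorem conj_eq {P x a : Matrix (Fin n) (Fin n) ℝ} (hP : IsUnit P) (h : x * P = P * a) :
    x = P * a * P⁻¹ := by
  rw [← h, mul_assoc, Matrix.mul_nonsing_inv _ ((Matrix.isUnit_iff_isUnit_det _).1 hP), mul_one]

theorem inv_mul_of_isUnit {P : Matrix (Fin n) (Fin n) ℝ} (hP : IsUnit P) : P⁻¹ * P = 1 :=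
  Matrix.nonsing_inv_mul _ ((Matrix.isUnit_iff_isUnit_det _).1 hP)

theorem prod_telescope (P : ℕ → Matrix (Fin n) (Fin n) ℝ) (m : ℕ)
    (hP : ∀ i, i ≤ m → IsUnit (P i)) (A : Fin m → Matrix (Fin n) (Fin n) ℝ) :
    (List.ofFn fun i : Fin m => P i.val * A i * (P (i.val + 1))⁻¹).prod =
      P 0 * (List.ofFn A).prod * (P m)⁻¹ := by
  induction m with
  | zero =>
    simp [Matrix.mul_nonsing_inv _ ((Matrix.isUnit_iff_isUnit_det _).1 (hP 0 le_rfl))]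
  | succ m ih =>
    have h := ih (fun i hi => hP i (by omega)) (fun i => A i.castSucc)
    rw [List.ofFn_succ', List.ofFn_succ' A, List.prod_concat, List.prod_concat]
    simp only [Fin.val_castSucc, Fin.val_last]
    rw [h]
    simp only [mul_assoc]
    rw [← mul_assoc (P m)⁻¹ (P m), inv_mul_of_isUnit (hP m (by omega)), one_mul]

/-- For `n = 2` each `Q i` commutes past the conjugated factors, so all of them collect on the
right. -/
theorem prod_two (P : Matrix (Fin 2) (Fin 2) ℝ) (hP : IsUnit P)
    (hPc : ∀ a, InSpanDS a → InSpanDS (P * a * P⁻¹)) (m : ℕ)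
    (A Q : Fin m → Matrix (Fin 2) (Fin 2) ℝ) (hA : ∀ i, InSpanDS (A i))
    (hQ : ∀ i, InSpanDS (Q i)) :
    (List.ofFn fun i : Fin m => P * A i * P⁻¹ * Q i).prod =
      P * (List.ofFn A).prod * P⁻¹ * (List.ofFn Q).prod := by
  induction m with
  | zero => simp [Matrix.mul_nonsing_inv _ ((Matrix.isUnit_iff_isUnit_det _).1 hP)]
  | succ m ih =>
    rw [List.ofFn_succ, List.ofFn_succ (f := A), List.ofFn_succ (f := Q), List.prod_cons,
      List.prod_cons, List.prod_cons,
      ih (fun i => A i.succ) (fun i => Q i.succ) (fun i => hA _) (fun i => hQ _)]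
    have hmem : InSpanDS (List.ofFn fun i : Fin m => A i.succ).prod := by
      apply (spanDS 2).list_prod_mem
      intro x hx
      obtain ⟨i, rfl⟩ := (List.mem_ofFn' _ _).1 hx
      exact hA _
    set B := (List.ofFn fun i : Fin m => A i.succ).prod
    have hcomm := spanDS_two_comm (hQ 0) (hPc B hmem)
    calc P * A 0 * P⁻¹ * Q 0 * (P * B * P⁻¹ * (List.ofFn fun i => Q i.succ).prod)
        = P * A 0 * P⁻¹ * (Q 0 * (P * B * P⁻¹)) * (List.ofFn fun i => Q i.succ).prod := by
          simp only [mul_assoc]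
      _ = P * A 0 * (P⁻¹ * P) * B * P⁻¹ * (Q 0 * (List.ofFn fun i => Q i.succ).prod) := by
          rw [hcomm]; simp only [mul_assoc]
      _ = _ := by rw [inv_mul_of_isUnit hP]; simp only [mul_assoc, one_mul]

theorem charpoly_conj {P : Matrix (Fin n) (Fin n) ℝ} (hP : IsUnit P)
    (B : Matrix (Fin n) (Fin n) ℝ) : (P * B * P⁻¹).charpoly = B.charpoly := by
  rw [← hP.unit_spec, charpoly_units_conj]

/-- Once `θ` is conjugation by `P`, it preserves the trace, and nondegeneracy forces the
product `V m` of all the twisting units to be `1`. -/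
theorem structure_of_inner {k : ℕ}
    (hinner : ∀ θ : spanDS n →ₐ[ℝ] spanDS n, Function.Bijective θ →
      ∃ P : Matrix (Fin n) (Fin n) ℝ, IsUnit P ∧
        ∀ a : spanDS n, (θ a : Matrix (Fin n) (Fin n) ℝ) * P = P * a)
    {φ : Fin (k + 3) → spanDS n → spanDS n} (H : PreservesTrace (trDS n) φ) :
    ∃ (θ : spanDS n →ₐ[ℝ] spanDS n) (U : Fin (k + 3) → (spanDS n)ˣ) (V : ℕ → (spanDS n)ˣ),
      Function.Bijective θ ∧ V 0 = 1 ∧ V (k + 3) = 1 ∧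
      (∀ i : Fin (k + 3), V (i.val + 1) = V i.val * U i) ∧
      ((List.ofFn fun i => (U i : spanDS n)).prod = 1) ∧
      (∀ (i : Fin (k + 3)) x, φ i x = ↑(V i.val)⁻¹ * θ x * ↑(V (i.val + 1))) := by
  obtain ⟨θ, U, V, hθ, hV0, hVs, hVm, hφ, htr⟩ := H.exists_twist trDS_comm trDS_nondeg
  obtain ⟨P, hPu, hP⟩ := hinner θ hθ
  have hθtr : ∀ a, trDS n (θ a) = trDS n a := by
    intro a
    rw [trDS_apply, conj_eq hPu (hP a), trDS_apply, trace_conj hPu]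
  have hV1 : ((V (k + 3) : spanDS n)) = 1 := by
    rw [← sub_eq_zero]
    apply trDS_nondeg
    intro b
    obtain ⟨a, rfl⟩ := hθ.2 b
    rw [trDS_comm, mul_sub, map_sub, htr, mul_one, hθtr, sub_self]
  exact ⟨θ, U, V, hθ, hV0, Units.ext hV1, hVs, by rw [hVm, hV1], hφ⟩

theorem isUnit_coe (u : (spanDS n)ˣ) : IsUnit ((u : spanDS n) : Matrix (Fin n) (Fin n) ℝ) :=
  u.isUnit.map (spanDS n).val

theorem coe_inv (u : (spanDS n)ˣ) : (((u⁻¹ : (spanDS n)ˣ) : spanDS n) : Matrix (Fin n) (Fin n) ℝ) =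
    ((u : spanDS n) : Matrix (Fin n) (Fin n) ℝ)⁻¹ := by
  refine (Matrix.inv_eq_right_inv ?_).symm
  rw [← MulMemClass.coe_mul, Units.mul_inv, OneMemClass.coe_one]

end Assembly

/-! ### The equivalences -/

/-- In both canonical forms the product of the `φ i (A i)` is a conjugate of the product of the
`A i`. -/
theorem form_to_charpoly (n m : ℕ)
    (φ : Fin m → Matrix (Fin n) (Fin n) ℝ → Matrix (Fin n) (Fin n) ℝ) :
      ((n = 2 ∧ ∃ P : Matrix (Fin n) (Fin n) ℝ, ∃ Q : Fin m → Matrix (Fin n) (Fin n) ℝ,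
          (P = 1 ∨ P = Matrix.diagonal (fun i => if i.val = 0 then (1:ℝ) else -1)) ∧
          (∀ i, InSpanDS (Q i) ∧ IsUnit (Q i)) ∧ (List.ofFn Q).prod = 1 ∧
          ∀ i : Fin m, ∀ A, InSpanDS A → φ i A = P * A * P⁻¹ * Q i) ∨
       (3 ≤ n ∧ ∃ P : ℕ → Matrix (Fin n) (Fin n) ℝ,
          (∀ i, i ≤ m → InSpanDS (P i) ∧ IsUnit (P i)) ∧ P m = P 0 ∧
          ∀ i : Fin m, ∀ A, InSpanDS A → φ i A = P i.val * A * (P (i.val + 1))⁻¹)) →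
      (∀ A : Fin m → Matrix (Fin n) (Fin n) ℝ, (∀ i, InSpanDS (A i)) →
        ((List.ofFn fun i => φ i (A i)).prod).charpoly = ((List.ofFn A).prod).charpoly) := by
  rintro (⟨rfl, P, Q, hP, hQ, hQ1, h⟩ | ⟨-, P, hP, hPm, h⟩) A hA
  · have hPu : IsUnit P := by
      rcases hP with rfl | rfl
      · exact isUnit_one
      · exact IsUnit.of_mul_eq_one _ signMat_mul_self
    have hPc : ∀ a, InSpanDS a → InSpanDS (P * a * P⁻¹) := by
      rcases hP with rfl | rfl
      · intro a ha; simpa using ha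
      · exact fun a ha => signMat_conj ha
    have e : (fun i => φ i (A i)) = fun i => P * A i * P⁻¹ * Q i := by
      funext i; exact h i _ (hA i)
    rw [e, prod_two P hPu hPc m A Q hA (fun i => (hQ i).1), hQ1, mul_one, charpoly_conj hPu]
  · have e : (fun i => φ i (A i)) = fun i : Fin m => P i.val * A i * (P (i.val + 1))⁻¹ := by
      funext i; exact h i _ (hA i)
    rw [e, prod_telescope P m (fun i hi => (hP i hi).2) A, hPm, charpoly_conj (hP 0 (by omega)).2]

/-- The canonical form is read off from `structure_of_inner`: for `n ≥ 3` the matrices are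
`P i = (V i)⁻¹ P` with `θ` conjugation by `P`; for `n = 2` commutativity gives
`φ i A = θ(A) U i`, so `Q i = U i`. -/
theorem trace_to_form (n m : ℕ) (hn : 2 ≤ n) (hm : 3 ≤ m)
    (φ : Fin m → Matrix (Fin n) (Fin n) ℝ → Matrix (Fin n) (Fin n) ℝ)
    (hφ : ∀ i A, InSpanDS A → InSpanDS (φ i A))
    (h : ∀ A : Fin m → Matrix (Fin n) (Fin n) ℝ, (∀ i, InSpanDS (A i)) →
        ((List.ofFn fun i => φ i (A i)).prod).trace = ((List.ofFn A).prod).trace) :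
      ((n = 2 ∧ ∃ P : Matrix (Fin n) (Fin n) ℝ, ∃ Q : Fin m → Matrix (Fin n) (Fin n) ℝ,
          (P = 1 ∨ P = Matrix.diagonal (fun i => if i.val = 0 then (1:ℝ) else -1)) ∧
          (∀ i, InSpanDS (Q i) ∧ IsUnit (Q i)) ∧ (List.ofFn Q).prod = 1 ∧
          ∀ i : Fin m, ∀ A, InSpanDS A → φ i A = P * A * P⁻¹ * Q i) ∨
       (3 ≤ n ∧ ∃ P : ℕ → Matrix (Fin n) (Fin n) ℝ,
          (∀ i, i ≤ m → InSpanDS (P i) ∧ IsUnit (P i)) ∧ P m = P 0 ∧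
          ∀ i : Fin m, ∀ A, InSpanDS A → φ i A = P i.val * A * (P (i.val + 1))⁻¹)) := by
  obtain ⟨k, rfl⟩ : ∃ k, m = k + 3 := ⟨m - 3, by omega⟩
  let ψ : Fin (k + 3) → spanDS n → spanDS n := fun i a => ⟨φ i a, hφ i a a.2⟩
  have hψ : PreservesTrace (trDS n) ψ := by
    intro A
    rw [trDS_apply, trDS_apply, coe_prod_ofFn, coe_prod_ofFn]
    exact h (fun i => A i) (fun i => (A i).2)
  rcases Nat.lt_or_ge n 3 with h3 | h3
  · left
    obtain rfl : n = 2 := by omega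
    refine ⟨rfl, ?_⟩
    obtain ⟨θ, U, V, hθ, hV0, hVm, hVs, hU, hφ'⟩ := structure_of_inner
      (fun θ hθ => (inner_two θ hθ).imp fun P hP => hP.2) hψ
    obtain ⟨P, hP1, hPu, hP⟩ := inner_two θ hθ
    refine ⟨P, fun i => ((U i : spanDS 2) : Matrix (Fin 2) (Fin 2) ℝ), hP1,
      fun i => ⟨(U i : spanDS 2).2, isUnit_coe _⟩, ?_, ?_⟩
    · rw [← coe_prod_ofFn, hU, OneMemClass.coe_one]
    · intro i A hA
      have e : ψ i ⟨A, hA⟩ = θ ⟨A, hA⟩ * U i := by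
        have hc : (↑(V i.val)⁻¹ : spanDS 2) * θ ⟨A, hA⟩ = θ ⟨A, hA⟩ * ↑(V i.val)⁻¹ :=
          Subtype.ext (spanDS_two_comm (Subtype.property _) (Subtype.property _))
        rw [hφ', hc, hVs, Units.val_mul, mul_assoc, Units.inv_mul_cancel_left]
      have e' := congrArg Subtype.val e
      rw [← conj_eq hPu (hP ⟨A, hA⟩)]
      exact e'
  · right
    refine ⟨h3, ?_⟩
    obtain ⟨θ, U, V, hθ, hV0, hVm, hVs, hU, hφ'⟩ := structure_of_inner
      (fun θ hθ => (inner_of_three_le h3 θ hθ).imp fun P hP => hP.2) hψ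
    obtain ⟨P, hP1, hPu, hP⟩ := inner_of_three_le h3 θ hθ
    refine ⟨fun i => ((↑(V i)⁻¹ : spanDS n) : Matrix (Fin n) (Fin n) ℝ) * P, ?_, ?_, ?_⟩
    · exact fun i _ => ⟨(spanDS n).mul_mem (Subtype.property _) hP1, (isUnit_coe _).mul hPu⟩
    · simp only [hV0, hVm]
    · intro i A hA
      have e := congrArg Subtype.val (hφ' i ⟨A, hA⟩)
      simp only [MulMemClass.coe_mul, conj_eq hPu (hP ⟨A, hA⟩)] at e
      have hinv : (((↑(V (i.val + 1))⁻¹ : spanDS n) : Matrix (Fin n) (Fin n) ℝ) * P)⁻¹ =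
          P⁻¹ * ((V (i.val + 1) : spanDS n) : Matrix (Fin n) (Fin n) ℝ) := by
        rw [Matrix.mul_inv_rev, ← coe_inv, inv_inv]
      rw [hinv]
      refine Eq.trans e ?_
      simp only [mul_assoc]

theorem stmt16 (n m : ℕ) (hn : 2 ≤ n) (hm : 3 ≤ m)
    (φ : Fin m → Matrix (Fin n) (Fin n) ℝ → Matrix (Fin n) (Fin n) ℝ)
    (hφ : ∀ i A, InSpanDS A → InSpanDS (φ i A)) :
    ((∀ A : Fin m → Matrix (Fin n) (Fin n) ℝ, (∀ i, InSpanDS (A i)) →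
        ((List.ofFn fun i => φ i (A i)).prod).trace = ((List.ofFn A).prod).trace) ↔
      (∀ A : Fin m → Matrix (Fin n) (Fin n) ℝ, (∀ i, InSpanDS (A i)) →
        ((List.ofFn fun i => φ i (A i)).prod).charpoly = ((List.ofFn A).prod).charpoly)) ∧
    ((∀ A : Fin m → Matrix (Fin n) (Fin n) ℝ, (∀ i, InSpanDS (A i)) →
        ((List.ofFn fun i => φ i (A i)).prod).trace = ((List.ofFn A).prod).trace) ↔
      ((n = 2 ∧ ∃ P : Matrix (Fin n) (Fin n) ℝ, ∃ Q : Fin m → Matrix (Fin n) (Fin n) ℝ,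
          (P = 1 ∨ P = Matrix.diagonal (fun i => if i.val = 0 then (1:ℝ) else -1)) ∧
          (∀ i, InSpanDS (Q i) ∧ IsUnit (Q i)) ∧ (List.ofFn Q).prod = 1 ∧
          ∀ i : Fin m, ∀ A, InSpanDS A → φ i A = P * A * P⁻¹ * Q i) ∨
       (3 ≤ n ∧ ∃ P : ℕ → Matrix (Fin n) (Fin n) ℝ,
          (∀ i, i ≤ m → InSpanDS (P i) ∧ IsUnit (P i)) ∧ P m = P 0 ∧
          ∀ i : Fin m, ∀ A, InSpanDS A → φ i A = P i.val * A * (P (i.val + 1))⁻¹))) := by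
  have h21 : (∀ A : Fin m → Matrix (Fin n) (Fin n) ℝ, (∀ i, InSpanDS (A i)) →
        ((List.ofFn fun i => φ i (A i)).prod).charpoly = ((List.ofFn A).prod).charpoly) →
      (∀ A : Fin m → Matrix (Fin n) (Fin n) ℝ, (∀ i, InSpanDS (A i)) →
        ((List.ofFn fun i => φ i (A i)).prod).trace = ((List.ofFn A).prod).trace) := by
    intro h A hA
    have : Nonempty (Fin n) := ⟨⟨0, by omega⟩⟩
    rw [trace_eq_neg_charpoly_coeff, trace_eq_neg_charpoly_coeff, h A hA]
  have h13 : (∀ A : Fin m → Matrix (Fin n) (Fin n) ℝ, (∀ i, InSpanDS (A i)) →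
        ((List.ofFn fun i => φ i (A i)).prod).trace = ((List.ofFn A).prod).trace) → _ :=
    fun h => trace_to_form n m hn hm φ hφ h
  have h32 := form_to_charpoly n m φ
  exact ⟨⟨fun h => h32 (h13 h), h21⟩, h13, fun h => h21 (h32 h)⟩
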